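/- Let n ≥ 4 be even. Then the max cut space of K_n equals the subspace {x ∈ ℝ^{C(n,2)} : the sums Σ_{k≠i} x_{ik} take the same value for every vertex i ∈ {1,…,n}}; in particular the max cut space of K_n has dimension exactly C(n−1,2). -/

import Mathlib

/-!
Write `n = 2m`. The maximum cuts are the sets of size `m`, and every vertex sum of `v_S` with
`|S| = m` equals `m`, which gives one inclusion.

For the other, let `φ` be a linear functional vanishing on the max cut space. Since `v_S` is
quadratic in the indicator function of `S`, a second difference of cut vectors of sets of size `m`
is `-2` times the alternating vector of a 4-cycle, so all these alternating vectors lie in the max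
cut space. The weights of `φ` on the edges therefore satisfy a four-point condition, which forces
them to have the form `a i + a j`; that is, `φ x = ∑ i, a i * vertexSum n x i`. Evaluating at a
maximum cut gives `∑ i, a i = 0`, so `φ` vanishes on every `x` with constant vertex sums.

The adjoint of the vertex sum map is `a ↦ (a i + a j)`, which is injective for `n ≥ 3`. Hence the
vertex sum map is onto `ℝ^n`, and requiring the vertex sums to be constant costs `n - 1`
dimensions: `C(n,2) - (n-1) = C(n-1,2)`.
-/

/-- Unordered pairs of distinct elements of `Fin n`, represented as ordered
pairs `(i, j)` with `i < j`; there are `n.choose 2` of them. -/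
abbrev PairIdx (n : ℕ) := {p : Fin n × Fin n // p.1 < p.2}

/-- The cut indicator vector `v_S ∈ ℝ^{C(n,2)}`: the coordinate at the pair
`{i, j}` is `1` if exactly one of `i, j` lies in `S`, and `0` otherwise. -/
noncomputable def cutVec (n : ℕ) (S : Finset (Fin n)) : PairIdx n → ℝ :=
  fun p => if (p.1.1 ∈ S ↔ p.1.2 ∈ S) then 0 else 1

/-- `S` is a maximum cut of the complete graph `K_n` (all edge weights `1`):
it maximizes `|S| * (n - |S|)`. -/
def IsMaxCut (n : ℕ) (S : Finset (Fin n)) : Prop :=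
  ∀ T : Finset (Fin n), T.card * (n - T.card) ≤ S.card * (n - S.card)

/-- The coordinate `x_{ik}` of `x ∈ ℝ^{C(n,2)}` at the unordered pair `{i, k}`
(`0` if `i = k`). -/
noncomputable def pairEntry (n : ℕ) (x : PairIdx n → ℝ) (i k : Fin n) : ℝ :=
  if h : i < k then x ⟨(i, k), h⟩ else if h' : k < i then x ⟨(k, i), h'⟩ else 0

/-- The total weight `Σ_{k ≠ i} x_{ik}` that `x ∈ ℝ^{C(n,2)}` puts at the
vertex `i`. -/
noncomputable def vertexSum (n : ℕ) (x : PairIdx n → ℝ) (i : Fin n) : ℝ :=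
  ∑ k ∈ Finset.univ.erase i, pairEntry n x i k

theorem exists_forall_ne_eq_add_of_fourPoint {V K : Type*} [Field K] [NeZero (2 : K)]
    (ω : Sym2 V → K)
    (hω : ∀ i j k l, [i, j, k, l].Nodup → ω s(i, k) + ω s(j, l) = ω s(j, k) + ω s(i, l)) :
    ∃ a : V → K, ∀ i j, i ≠ j → ω s(i, j) = a i + a j := by
  classical
  rcases isEmpty_or_nonempty V with _ | ⟨⟨o⟩⟩
  · exact ⟨0, fun i => isEmptyElim i⟩
  -- The potential at the base point `o` must be half the constant value of this Gromov product.
  let g (i j : V) : K := ω s(o, i) + ω s(o, j) - ω s(i, j)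
  have g_comm (i j : V) : g i j = g j i := by
    simp only [g, Sym2.eq_swap (a := i)]
    ring
  have g_congr_right {i j k : V} (hi : i ≠ o) (hj : j ≠ o) (hk : k ≠ o) (hij : i ≠ j)
      (hik : i ≠ k) : g i j = g i k := by
    rcases eq_or_ne j k with rfl | hjk
    · rfl
    · have h := hω o i j k (by simp [*, hi.symm, hj.symm, hk.symm])
      linear_combination h
  obtain ⟨c, hc⟩ : ∃ c, ∀ i j, i ≠ o → j ≠ o → i ≠ j → g i j = c := by
    by_cases h : ∃ p q, p ≠ o ∧ q ≠ o ∧ p ≠ q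
    · obtain ⟨p, q, hp, hq, hpq⟩ := h
      refine ⟨g p q, fun i j hi hj hij => ?_⟩
      rcases eq_or_ne i q with rfl | hiq
      · rw [g_congr_right hi hj hp hij hpq.symm, g_comm]
      · rw [g_congr_right hi hj hq hij hiq, g_comm, g_congr_right hq hi hp hiq.symm hpq.symm,
          g_comm]
    · exact ⟨0, fun i j hi hj hij => (h ⟨i, j, hi, hj, hij⟩).elim⟩
  refine ⟨fun i => if i = o then c / 2 else ω s(o, i) - c / 2, fun i j hij => ?_⟩
  rcases eq_or_ne i o with rfl | hi
  · simp only [hij.symm, if_true, if_false, add_sub_cancel]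
  rcases eq_or_ne j o with rfl | hj
  · simp only [hij, if_true, if_false, sub_add_cancel, Sym2.eq_swap (a := i)]
  · simp only [hi, hj, if_false]
    linear_combination add_halves c - hc i j hi hj hij

theorem finrank_comap_add_finrank {K V W : Type*} [DivisionRing K] [AddCommGroup V]
    [Module K V] [AddCommGroup W] [Module K W] [FiniteDimensional K V] {f : V →ₗ[K] W}
    (hf : Function.Surjective f) (p : Submodule K W) :
    Module.finrank K (p.comap f) + Module.finrank K W
      = Module.finrank K V + Module.finrank K p := by
  have := Module.Finite.of_surjective f hf
  have range_eq_top : (p.mkQ ∘ₗ f).range = ⊤ :=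
    LinearMap.range_eq_top.2 (p.mkQ_surjective.comp hf)
  have rank_nullity := (p.mkQ ∘ₗ f).finrank_range_add_finrank_ker
  rw [range_eq_top, finrank_top, LinearMap.ker_comp, Submodule.ker_mkQ] at rank_nullity
  have quotient := p.finrank_quotient_add_finrank
  omega

theorem mem_span_one_iff {ι K : Type*} [Semiring K] {f : ι → K} :
    f ∈ Submodule.span K {(1 : ι → K)} ↔ ∀ i j, f i = f j := by
  rw [Submodule.mem_span_singleton]
  constructor
  · rintro ⟨c, rfl⟩ _ _
    rfl
  · intro hf
    rcases isEmpty_or_nonempty ι with _ | ⟨⟨i⟩⟩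
    · exact ⟨0, Subsingleton.elim _ _⟩
    · exact ⟨f i, funext fun j => by simp [hf i j]⟩

theorem linearMap_apply_eq_sum_single {ι K : Type*} [Fintype ι] [DecidableEq ι] [CommSemiring K]
    (φ : (ι → K) →ₗ[K] K) (x : ι → K) : φ x = ∑ i, φ (Pi.single i 1) * x i := by
  conv_lhs => rw [pi_eq_sum_univ' x]
  simp only [map_sum, map_smul, smul_eq_mul, mul_comm]

section

variable {n : ℕ}

theorem card_pairIdx : Fintype.card (PairIdx n) = n.choose 2 := by
  rw [Fintype.card_subtype, ← Finset.univ_product_univ, Finset.card_product_filter_lt,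
    Finset.card_fin]

theorem sum_pairIdx_add_swap {M : Type*} [AddCommMonoid M] (f : Fin n → Fin n → M) :
    ∑ p : PairIdx n, (f p.1.1 p.1.2 + f p.1.2 p.1.1)
      = ∑ i, ∑ k ∈ Finset.univ.erase i, f i k := by
  have h := Finset.sum_sum_Ioi_add_eq_sum_sum_off_diag fun k i => f i k
  simp only [Finset.compl_singleton] at h
  rw [← h, ← Finset.sum_finset_product' (Finset.univ.filter fun q : Fin n × Fin n => q.1 < q.2)
    _ _ (by simp) (f := fun i k => f i k + f k i)]
  exact (Finset.sum_subtype _ (by simp) fun q : Fin n × Fin n => f q.1 q.2 + f q.2 q.1).symm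

theorem pairEntry_of_lt (x : PairIdx n → ℝ) {i k : Fin n} (h : i < k) :
    pairEntry n x i k = x ⟨(i, k), h⟩ :=
  dif_pos h

theorem pairEntry_of_gt (x : PairIdx n → ℝ) {i k : Fin n} (h : k < i) :
    pairEntry n x i k = x ⟨(k, i), h⟩ := by
  rw [pairEntry, dif_neg h.not_gt, dif_pos h]

theorem pairEntry_self (x : PairIdx n → ℝ) (i : Fin n) : pairEntry n x i i = 0 := by
  simp [pairEntry]

theorem sum_mul_vertexSum (a : Fin n → ℝ) (x : PairIdx n → ℝ) :
    ∑ i, a i * vertexSum n x i = ∑ p : PairIdx n, (a p.1.1 + a p.1.2) * x p := by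
  simp only [vertexSum, Finset.mul_sum]
  rw [← sum_pairIdx_add_swap fun i k => a i * pairEntry n x i k]
  refine Finset.sum_congr rfl fun p _ => ?_
  rw [pairEntry_of_lt x p.2, pairEntry_of_gt x p.2, add_mul]

/-- The map `x ↦ vertexSum n x` as a linear map. -/
noncomputable def vertexSumLinear (n : ℕ) : (PairIdx n → ℝ) →ₗ[ℝ] (Fin n → ℝ) where
  toFun := vertexSum n
  map_add' x y := by
    ext i
    simp only [vertexSum, Pi.add_apply, ← Finset.sum_add_distrib]
    refine Finset.sum_congr rfl fun k _ => ?_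
    unfold pairEntry
    split_ifs <;> simp
  map_smul' c x := by
    ext i
    simp only [vertexSum, Pi.smul_apply, RingHom.id_apply, smul_eq_mul, Finset.mul_sum]
    refine Finset.sum_congr rfl fun k _ => ?_
    unfold pairEntry
    split_ifs <;> simp

theorem vertexSumLinear_surjective (hn : 3 ≤ n) : Function.Surjective (vertexSumLinear n) := by
  rw [← LinearMap.range_eq_top]
  by_contra hrange
  obtain ⟨φ, hφ, hφ_range⟩ := Submodule.exists_le_ker_of_lt_top _ (lt_top_iff_ne_top.2 hrange)
  let a (i : Fin n) : ℝ := φ (Pi.single i 1)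
  have add_eq_zero_of_lt {i k : Fin n} (hik : i < k) : a i + a k = 0 := by
    have h : φ (vertexSum n (Pi.single ⟨(i, k), hik⟩ 1)) = 0 := hφ_range ⟨_, rfl⟩
    rw [linearMap_apply_eq_sum_single, sum_mul_vertexSum] at h
    simpa [Pi.single_apply] using h
  have add_eq_zero {i k : Fin n} (hik : i ≠ k) : a i + a k = 0 := by
    rcases hik.lt_or_gt with h | h
    · exact add_eq_zero_of_lt h
    · rw [add_comm, add_eq_zero_of_lt h]
  have a_eq_zero (i : Fin n) : a i = 0 := by
    have one_lt_card : 1 < (Finset.univ.erase i).card := by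
      rw [Finset.card_erase_of_mem (Finset.mem_univ i), Finset.card_fin]
      omega
    obtain ⟨j, hj, k, hk, hjk⟩ := Finset.one_lt_card.1 one_lt_card
    linarith [add_eq_zero (Finset.ne_of_mem_erase hj), add_eq_zero (Finset.ne_of_mem_erase hk),
      add_eq_zero hjk]
  exact hφ (LinearMap.ext fun y => by
    rw [linearMap_apply_eq_sum_single]
    exact Finset.sum_eq_zero fun i _ => mul_eq_zero_of_left (a_eq_zero i) _)

/-- The space of vectors whose vertex sums are all equal, encoded as the preimage of the constant
functions under the vertex sum map. -/
noncomputable def regularSpace (n : ℕ) : Submodule ℝ (PairIdx n → ℝ) :=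
  (Submodule.span ℝ {(1 : Fin n → ℝ)}).comap (vertexSumLinear n)

theorem mem_regularSpace {x : PairIdx n → ℝ} :
    x ∈ regularSpace n ↔ ∀ i j, vertexSum n x i = vertexSum n x j :=
  mem_span_one_iff

theorem finrank_regularSpace (hn : 3 ≤ n) :
    Module.finrank ℝ (regularSpace n) = (n - 1).choose 2 := by
  obtain ⟨k, rfl⟩ : ∃ k, n = k + 1 := ⟨n - 1, by omega⟩
  have h := finrank_comap_add_finrank (vertexSumLinear_surjective hn)
    (Submodule.span ℝ {(1 : Fin (k + 1) → ℝ)})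
  rw [Module.finrank_fintype_fun_eq_card, Module.finrank_fintype_fun_eq_card, card_pairIdx,
    Fintype.card_fin, finrank_span_singleton one_ne_zero, Nat.choose_succ_succ' k 1,
    Nat.choose_one_right, one_add_one_eq_two] at h
  change Module.finrank ℝ (regularSpace (k + 1)) + (k + 1) = _ at h
  rw [Nat.add_sub_cancel]
  omega

/-- The linear span of the indicator vectors of the maximum cuts of `K_n`. -/
noncomputable def maxCutSpace (n : ℕ) : Submodule ℝ (PairIdx n → ℝ) :=
  Submodule.span ℝ {v | ∃ S : Finset (Fin n), IsMaxCut n S ∧ v = cutVec n S}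

theorem isMaxCut_add_self_iff {m : ℕ} {S : Finset (Fin (m + m))} :
    IsMaxCut (m + m) S ↔ S.card = m := by
  have cut_size (T : Finset (Fin (m + m))) :
      ((T.card * (m + m - T.card) : ℕ) : ℤ) = m ^ 2 - (m - T.card) ^ 2 := by
    rw [Nat.cast_mul, Nat.cast_sub (card_finset_fin_le T)]
    push_cast
    ring
  constructor
  · intro hS
    obtain ⟨T, -, hT⟩ := Finset.exists_subset_card_eq
      (s := (Finset.univ : Finset (Fin (m + m)))) (n := m) (by simp)
    have h : (m ^ 2 - (m - T.card) ^ 2 : ℤ) ≤ m ^ 2 - (m - S.card) ^ 2 := by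
      rw [← cut_size, ← cut_size]
      exact_mod_cast hS T
    have sq_eq_zero : ((m : ℤ) - S.card) ^ 2 = 0 := by
      rw [hT] at h
      exact le_antisymm (by linarith) (sq_nonneg _)
    have sub_eq_zero : (m : ℤ) - S.card = 0 := pow_eq_zero_iff two_ne_zero |>.1 sq_eq_zero
    omega
  · intro hS T
    rw [← Nat.cast_le (α := ℤ), cut_size, cut_size, hS]
    linarith [sq_nonneg ((m : ℤ) - T.card)]

theorem cutVec_mem_maxCutSpace {m : ℕ} {S : Finset (Fin (m + m))} (hS : S.card = m) :
    cutVec (m + m) S ∈ maxCutSpace (m + m) :=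
  Submodule.subset_span ⟨S, isMaxCut_add_self_iff.2 hS, rfl⟩

theorem pairEntry_cutVec (S : Finset (Fin n)) (i k : Fin n) :
    pairEntry n (cutVec n S) i k = if (i ∈ S ↔ k ∈ S) then 0 else 1 := by
  rcases lt_trichotomy i k with h | rfl | h
  · rw [pairEntry_of_lt _ h, cutVec]
  · rw [pairEntry_self, if_pos Iff.rfl]
  · simp only [pairEntry_of_gt _ h, cutVec, iff_comm]

theorem vertexSum_cutVec (S : Finset (Fin n)) (i : Fin n) :
    vertexSum n (cutVec n S) i = if i ∈ S then (Sᶜ.card : ℝ) else S.card := by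
  rw [vertexSum, Finset.sum_erase _ (pairEntry_self _ i)]
  simp only [pairEntry_cutVec]
  split_ifs with hi <;> simp [hi, Finset.sum_ite, Finset.filter_not, Finset.compl_eq_univ_sdiff]

theorem vertexSum_cutVec_of_card_eq {m : ℕ} {S : Finset (Fin (m + m))} (hS : S.card = m)
    (i : Fin (m + m)) : vertexSum (m + m) (cutVec (m + m) S) i = m := by
  rw [vertexSum_cutVec, Finset.card_compl, hS, Fintype.card_fin, Nat.add_sub_cancel, ite_self]

/-- The indicator vector of an edge; it is `0` on the diagonal of `Sym2 (Fin n)`. -/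
def edgeVec (n : ℕ) (e : Sym2 (Fin n)) : PairIdx n → ℝ :=
  fun p => if s(p.1.1, p.1.2) = e then 1 else 0

theorem edgeVec_mk_eq_single (p : PairIdx n) : edgeVec n s(p.1.1, p.1.2) = Pi.single p 1 := by
  ext q
  have mk_eq_mk_iff : s(q.1.1, q.1.2) = s(p.1.1, p.1.2) ↔ q = p := by
    rw [Sym2.eq_iff, Subtype.ext_iff, Prod.ext_iff, or_iff_left]
    rintro ⟨h1, h2⟩
    exact (q.2.trans_eq h2).not_gt (h1 ▸ p.2)
  simp only [edgeVec, mk_eq_mk_iff, Pi.single_apply]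

theorem edgeVec_mk_apply {i k : Fin n} (hik : i ≠ k) (p : PairIdx n) :
    edgeVec n s(i, k) p
      = (if p.1.1 = i then 1 else 0) * (if p.1.2 = k then 1 else 0)
        + (if p.1.1 = k then 1 else 0) * (if p.1.2 = i then 1 else 0) := by
  unfold edgeVec
  grind

theorem cutVec_apply (S : Finset (Fin n)) (p : PairIdx n) :
    cutVec n S p = (if p.1.1 ∈ S then 1 else 0) + (if p.1.2 ∈ S then 1 else 0)
      - 2 * (if p.1.1 ∈ S then 1 else 0) * (if p.1.2 ∈ S then 1 else 0) := by
  unfold cutVec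
  grind

theorem cutVec_second_difference {R : Finset (Fin n)} {i j k l : Fin n}
    (hi : i ∉ R) (hj : j ∉ R) (hk : k ∉ R) (hl : l ∉ R)
    (hik : i ≠ k) (hil : i ≠ l) (hjk : j ≠ k) (hjl : j ≠ l) :
    cutVec n (insert i (insert k R)) - cutVec n (insert j (insert k R))
      - cutVec n (insert i (insert l R)) + cutVec n (insert j (insert l R))
    = (-2 : ℝ) • (edgeVec n s(i, k) - edgeVec n s(j, k)
        - edgeVec n s(i, l) + edgeVec n s(j, l)) := by
  have indicator_insert_insert {u v : Fin n} (hu : u ∉ R) (hv : v ∉ R) (huv : u ≠ v) (a : Fin n) :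
      (if a ∈ insert u (insert v R) then (1 : ℝ) else 0)
        = (if a ∈ R then 1 else 0) + (if a = u then 1 else 0) + (if a = v then 1 else 0) := by
    grind
  ext p
  simp only [Pi.add_apply, Pi.sub_apply, Pi.smul_apply, smul_eq_mul, cutVec_apply,
    indicator_insert_insert hi hk hik, indicator_insert_insert hj hk hjk,
    indicator_insert_insert hi hl hil, indicator_insert_insert hj hl hjl,
    edgeVec_mk_apply hik, edgeVec_mk_apply hjk, edgeVec_mk_apply hil, edgeVec_mk_apply hjl]
  ring

theorem edgeVec_fourCycle_mem_maxCutSpace (hn : Even n) {i j k l : Fin n}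
    (hnodup : [i, j, k, l].Nodup) :
    edgeVec n s(i, k) - edgeVec n s(j, k) - edgeVec n s(i, l) + edgeVec n s(j, l)
      ∈ maxCutSpace n := by
  obtain ⟨m, rfl⟩ := hn
  have card_eq_four : ({i, j, k, l} : Finset (Fin (m + m))).card = 4 := by
    simpa using List.toFinset_card_of_nodup hnodup
  have hm : 4 ≤ m + m := card_eq_four ▸ card_finset_fin_le _
  obtain ⟨R, hR, hR_card⟩ := Finset.exists_subset_card_eq
    (s := ({i, j, k, l} : Finset (Fin (m + m)))ᶜ) (n := m - 2) (by
      rw [Finset.card_compl, Fintype.card_fin, card_eq_four]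
      omega)
  have notMem_R {u : Fin (m + m)} (hu : u ∈ ({i, j, k, l} : Finset (Fin (m + m)))) : u ∉ R :=
    fun huR => Finset.mem_compl.1 (hR huR) hu
  have cutVec_mem {u v : Fin (m + m)} (hu : u ∉ R) (hv : v ∉ R) (huv : u ≠ v) :
      cutVec (m + m) (insert u (insert v R)) ∈ maxCutSpace (m + m) :=
    cutVec_mem_maxCutSpace (by
      rw [Finset.card_insert_of_notMem (by simp [hu, huv]), Finset.card_insert_of_notMem hv,
        hR_card]
      omega)
  have hi : i ∉ R := notMem_R (by simp)
  have hj : j ∉ R := notMem_R (by simp)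
  have hk : k ∉ R := notMem_R (by simp)
  have hl : l ∉ R := notMem_R (by simp)
  obtain ⟨⟨-, hik, hil⟩, ⟨hjk, hjl⟩, -⟩ :
      (i ≠ j ∧ i ≠ k ∧ i ≠ l) ∧ (j ≠ k ∧ j ≠ l) ∧ k ≠ l := by simpa using hnodup
  rw [← Submodule.smul_mem_iff _ (by norm_num : (-2 : ℝ) ≠ 0),
    ← cutVec_second_difference hi hj hk hl hik hil hjk hjl]
  exact add_mem (sub_mem (sub_mem (cutVec_mem hi hk hik) (cutVec_mem hj hk hjk))
    (cutVec_mem hi hl hil)) (cutVec_mem hj hl hjl)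

theorem exists_eq_sum_mul_vertexSum_of_maxCutSpace_le_ker (hn : Even n)
    {φ : (PairIdx n → ℝ) →ₗ[ℝ] ℝ} (hφ : maxCutSpace n ≤ LinearMap.ker φ) :
    ∃ a : Fin n → ℝ, ∀ x, φ x = ∑ i, a i * vertexSum n x i := by
  obtain ⟨a, ha⟩ := exists_forall_ne_eq_add_of_fourPoint (fun e => φ (edgeVec n e)) (by
    intro i j k l hnodup
    have h : φ _ = 0 := hφ (edgeVec_fourCycle_mem_maxCutSpace hn hnodup)
    simp only [map_add, map_sub] at h
    linear_combination h)
  refine ⟨a, fun x => ?_⟩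
  rw [sum_mul_vertexSum, linearMap_apply_eq_sum_single]
  refine Finset.sum_congr rfl fun p _ => ?_
  rw [← ha _ _ p.2.ne, edgeVec_mk_eq_single]

theorem maxCutSpace_le_regularSpace (hn : Even n) : maxCutSpace n ≤ regularSpace n := by
  obtain ⟨m, rfl⟩ := hn
  refine Submodule.span_le.2 ?_
  rintro _ ⟨S, hS, rfl⟩
  rw [isMaxCut_add_self_iff] at hS
  refine mem_regularSpace.2 fun i j => ?_
  rw [vertexSum_cutVec_of_card_eq hS, vertexSum_cutVec_of_card_eq hS]

theorem regularSpace_le_maxCutSpace (hn : Even n) : regularSpace n ≤ maxCutSpace n := by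
  intro x hx
  by_contra hx_notMem
  obtain ⟨φ, hφx, hφ⟩ := Submodule.exists_le_ker_of_notMem hx_notMem
  obtain ⟨a, ha⟩ := exists_eq_sum_mul_vertexSum_of_maxCutSpace_le_ker hn hφ
  obtain ⟨m, rfl⟩ := hn
  obtain ⟨T, -, hT⟩ := Finset.exists_subset_card_eq
    (s := (Finset.univ : Finset (Fin (m + m)))) (n := m) (by simp)
  have sum_a_mul : (∑ i, a i) * m = 0 := by
    have h : φ (cutVec (m + m) T) = 0 := hφ (cutVec_mem_maxCutSpace hT)
    simpa only [ha, vertexSum_cutVec_of_card_eq hT, ← Finset.sum_mul] using h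
  have sum_a : ∑ i, a i = 0 := by
    rcases m.eq_zero_or_pos with rfl | hm
    · simp
    · exact (mul_eq_zero.1 sum_a_mul).resolve_right (by positivity)
  obtain ⟨c, hc⟩ := Submodule.mem_span_singleton.1 hx
  have vertexSum_x (i : Fin (m + m)) : vertexSum (m + m) x i = c :=
    (congrFun hc i).symm.trans (mul_one c)
  apply hφx
  simp only [ha, vertexSum_x, ← Finset.sum_mul, sum_a, zero_mul]

theorem maxCutSpace_eq_regularSpace (hn : Even n) : maxCutSpace n = regularSpace n :=
  (maxCutSpace_le_regularSpace hn).antisymm (regularSpace_le_maxCutSpace hn)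

end

/-- For even `n ≥ 4`, the max cut space of `K_n` is exactly the set of vectors
`x ∈ ℝ^{C(n,2)}` whose total weight at each vertex is the same for all
vertices; in particular its dimension is exactly `C(n-1,2)`. -/
theorem maxCutSpace_complete_even (n : ℕ) (hn : 4 ≤ n) (heven : Even n) :
    (Submodule.span ℝ
        {v : PairIdx n → ℝ | ∃ S : Finset (Fin n), IsMaxCut n S ∧ v = cutVec n S}
        : Set (PairIdx n → ℝ))
      = {x : PairIdx n → ℝ | ∀ i j : Fin n, vertexSum n x i = vertexSum n x j} ∧
    Module.finrank ℝ
        ↥(Submodule.span ℝ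
          {v : PairIdx n → ℝ | ∃ S : Finset (Fin n), IsMaxCut n S ∧ v = cutVec n S})
      = (n - 1).choose 2 := by
  change (maxCutSpace n : Set (PairIdx n → ℝ)) = _ ∧ Module.finrank ℝ (maxCutSpace n) = _
  rw [maxCutSpace_eq_regularSpace heven]
  exact ⟨Set.ext fun _ => mem_regularSpace, finrank_regularSpace (by omega)⟩
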